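/- If a mechanism is a composition of Gaussian mechanisms satisfying ρ-zCDP (i.e., each Gaussian mechanism with sensitivity Δᵢ and noise scale σᵢ contributes ρᵢ = Δᵢ²/(2σᵢ²) with Σρᵢ = ρ), then it satisfies μ-GDP with μ = √(2ρ). -/

import Mathlib

open MeasureTheory ProbabilityTheory Real Set

/-- Standard normal CDF. -/
noncomputable def Phi (x : ℝ) : ℝ := ((gaussianReal 0 1) (Set.Iic x)).toReal

/-- Inverse of the standard normal CDF (on (0,1)). -/
noncomputable def PhiInv (p : ℝ) : ℝ := sInf {x : ℝ | p ≤ Phi x}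

/-- Gaussian tradeoff function `G_μ`, extended by `G_μ(0)=1`, `G_μ(1)=0`. -/
noncomputable def Gmu (μ α : ℝ) : ℝ :=
  if α ≤ 0 then 1 else if 1 ≤ α then 0 else Phi (PhiInv (1 - α) - μ)

/-- Optimal hypothesis-testing tradeoff function: minimal type-II error over
randomized tests with type-I error at most `α`. -/
noncomputable def tradeoff {Ω : Type*} [MeasurableSpace Ω] (P Q : Measure Ω) (α : ℝ) : ℝ :=
  sInf { b : ℝ | ∃ φ : Ω → ℝ, Measurable φ ∧ (∀ ω, φ ω ∈ Set.Icc (0:ℝ) 1) ∧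
    (∫ ω, φ ω ∂P) ≤ α ∧ b = 1 - ∫ ω, φ ω ∂Q }

/-- Rényi divergence of order `a > 1`. -/
noncomputable def renyiDiv {Ω : Type*} [MeasurableSpace Ω] (a : ℝ) (P Q : Measure Ω) : ℝ :=
  (a - 1)⁻¹ * Real.log (∫ ω, ((Measure.rnDeriv P Q ω).toReal) ^ a ∂Q)

/-- `(ε,δ)`-differential privacy. -/
def IsDP {X Ω : Type*} [MeasurableSpace Ω] (M : X → Measure Ω) (Neighbor : X → X → Prop)
    (ε δ : ℝ) : Prop :=
  ∀ x x', Neighbor x x' → ∀ S : Set Ω, MeasurableSet S →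
    ((M x) S).toReal ≤ Real.exp ε * ((M x') S).toReal + δ

/-- `ρ`-zero-concentrated differential privacy. -/
def IsZCDP {X Ω : Type*} [MeasurableSpace Ω] (M : X → Measure Ω) (Neighbor : X → X → Prop)
    (ρ : ℝ) : Prop :=
  ∀ x x', Neighbor x x' → ∀ a : ℝ, 1 < a → renyiDiv a (M x) (M x') ≤ ρ * a

/-- `μ`-Gaussian differential privacy. -/
def IsGDP {X Ω : Type*} [MeasurableSpace Ω] (M : X → Measure Ω) (Neighbor : X → X → Prop)
    (μ : ℝ) : Prop :=
  ∀ x x', Neighbor x x' → ∀ α ∈ Set.Icc (0:ℝ) 1, Gmu μ α ≤ tradeoff (M x) (M x') α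

/-
The log-likelihood ratio `log (dQ/dP)` between `P = N(m, v)` and `Q = N(m', v)` is itself Gaussian:
its law under `P` is `N(-w/2, w)` with `w = (m - m')² / v`. Log-likelihood ratios add up over a
product of independent mechanisms, and so do the parameters `w`. A Gaussian log-likelihood ratio of
variance `w` has law `N(w/2, w)` under `Q`, so by the Neyman–Pearson lemma the optimal tests between
`P` and `Q` are as powerful as those between `N(0, 1)` and `N(√w, 1)`.
-/

open scoped NNReal ENNReal

lemma monotone_apply_sInf_eq {X Y : Type*} [ConditionallyCompleteLinearOrder X] [TopologicalSpace X]
    [OrderTopology X] [DenselyOrdered X] [Nonempty X] [LinearOrder Y] [TopologicalSpace Y]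
    [OrderTopology Y] {F : X → Y} {a b p : Y} (hmono : Monotone F) (hcont : Continuous F)
    (hbot : Filter.Tendsto F Filter.atBot (nhds a)) (htop : Filter.Tendsto F Filter.atTop (nhds b))
    (hp : p ∈ Ioo a b) : F (sInf {x | p ≤ F x}) = p := by
  obtain ⟨y, hy⟩ := (hbot.eventually_lt_const hp.1).exists
  obtain ⟨z, hz⟩ := (htop.eventually_const_lt hp.2).exists
  obtain ⟨x, rfl⟩ := mem_range_of_exists_le_of_exists_ge hcont ⟨y, hy.le⟩ ⟨z, hz.le⟩
  have hbdd : BddBelow {t | F x ≤ F t} :=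
    ⟨y, fun t ht => (hmono.reflect_lt (hy.trans_le ht)).le⟩
  have hclosed : IsClosed {t | F x ≤ F t} := isClosed_le continuous_const hcont
  have hmem : F x ≤ F (sInf {t | F x ≤ F t}) := hclosed.csInf_mem ⟨x, le_rfl⟩ hbdd
  exact (hmono (csInf_le hbdd le_rfl)).antisymm hmem

lemma continuous_cdf (μ : Measure ℝ) [IsProbabilityMeasure μ] [NullSingletonClass μ] :
    Continuous (cdf μ) := by
  refine continuous_iff_continuousAt.2 fun x => ?_
  have hjump : ENNReal.ofReal (cdf μ x - Function.leftLim (cdf μ) x) = 0 := by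
    rw [← StieltjesFunction.measure_singleton, measure_cdf, measure_singleton]
  rw [(monotone_cdf μ).continuousAt_iff_leftLim_eq_rightLim, StieltjesFunction.rightLim_eq]
  exact ((monotone_cdf μ).leftLim_le le_rfl).antisymm
    (sub_nonpos.1 (ENNReal.ofReal_eq_zero.1 hjump))

lemma Phi_eq_cdf : Phi = cdf (gaussianReal 0 1) :=
  funext fun x => (cdf_eq_real _ x).symm

lemma monotone_Phi : Monotone Phi :=
  Phi_eq_cdf ▸ monotone_cdf _

lemma Phi_PhiInv {p : ℝ} (hp : p ∈ Ioo 0 1) : Phi (PhiInv p) = p := by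
  have := nullSingletonClass_gaussianReal (μ := 0) (v := 1) one_ne_zero
  rw [PhiInv, Phi_eq_cdf]
  exact monotone_apply_sInf_eq (monotone_cdf _) (continuous_cdf _) (tendsto_cdf_atBot _)
    (tendsto_cdf_atTop _) hp

lemma Gmu_antitone (α : ℝ) : Antitone fun μ => Gmu μ α := by
  intro μ μ' hμ
  simp only [Gmu]
  split_ifs
  · exact le_rfl
  · exact le_rfl
  · exact monotone_Phi (sub_le_sub_left hμ _)

lemma gaussianReal_real_Iic (m x : ℝ) {v : ℝ≥0} (hv : v ≠ 0) :
    (gaussianReal m v).real (Iic x) = Phi ((x - m) / √v) := by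
  have hsqrt : 0 < √(v : ℝ) := Real.sqrt_pos.2 (NNReal.coe_pos.2 (pos_iff_ne_zero.2 hv))
  have hstd : HasLaw (fun y => (y - m) / √(v : ℝ)) (gaussianReal 0 1) (gaussianReal m v) := by
    convert gaussianReal_div_const (gaussianReal_sub_const HasLaw.id m) (√(v : ℝ)) using 2
    · simp only [id]
    · simp only [sub_self, zero_div]
    · refine NNReal.eq ?_
      simp [hv]
  calc (gaussianReal m v).real (Iic x)
      = (gaussianReal m v).real {y | (y - m) / √(v : ℝ) ≤ (x - m) / √(v : ℝ)} := by
        congr 1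
        ext y
        simp [div_le_div_iff_of_pos_right hsqrt]
    _ = Phi ((x - m) / √v) := hstd.measureReal_eq measurableSet_Iic

lemma gaussianReal_real_Ioi (m x : ℝ) {v : ℝ≥0} (hv : v ≠ 0) :
    (gaussianReal m v).real (Ioi x) = 1 - Phi ((x - m) / √v) := by
  rw [← gaussianReal_real_Iic m x hv, ← probReal_compl_eq_one_sub measurableSet_Iic, compl_Iic]

lemma gaussianReal_eq_withDensity (m m' : ℝ) {v : ℝ≥0} (hv : v ≠ 0) :
    gaussianReal m' v = (gaussianReal m v).withDensity
      fun x => ENNReal.ofReal (exp ((m' - m) / v * (x - m) - (m' - m) ^ 2 / (2 * v))) := by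
  rw [gaussianReal_of_var_ne_zero _ hv, gaussianReal_of_var_ne_zero _ hv,
    ← withDensity_mul _ (measurable_gaussianPDF _ _) (by fun_prop)]
  congr 1 with x
  have hv' : (v : ℝ) ≠ 0 := NNReal.coe_ne_zero.2 hv
  simp only [Pi.mul_apply, gaussianPDF, gaussianPDFReal]
  rw [← ENNReal.ofReal_mul (by positivity), mul_assoc (√_)⁻¹, ← exp_add]
  congr 3
  field_simp
  ring

lemma gaussianReal_withDensity_exp {v : ℝ≥0} (hv : v ≠ 0) :
    (gaussianReal (-(v / 2)) v).withDensity (fun x => ENNReal.ofReal (exp x)) =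
      gaussianReal (v / 2) v := by
  have hv' : (v : ℝ) ≠ 0 := NNReal.coe_ne_zero.2 hv
  rw [gaussianReal_eq_withDensity (-(v / 2)) (v / 2) hv]
  congr! 4 with x
  field_simp
  ring

lemma hasLaw_sum_gaussianReal {Ω ι : Type*} [MeasurableSpace Ω] [Fintype ι] {P : Measure Ω}
    {X : ι → Ω → ℝ} {m : ι → ℝ} {v : ι → ℝ≥0} (hX : ∀ i, HasLaw (X i) (gaussianReal (m i) (v i)) P)
    (hindep : iIndepFun X P) :
    HasLaw (fun ω => ∑ i, X i ω) (gaussianReal (∑ i, m i) (∑ i, v i)) P where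
  map_eq := by
    have := hindep.isProbabilityMeasure
    refine Measure.ext_of_charFun ?_
    rw [hindep.charFun_map_fun_sum_eq_prod fun i => (hX i).aemeasurable]
    ext t
    simp only [Finset.prod_apply, (hX _).map_eq, charFun_gaussianReal, ← Complex.exp_sum]
    push_cast
    simp only [Finset.sum_sub_distrib, Finset.mul_sum, Finset.sum_mul, Finset.sum_div]

lemma map_withDensity_comp {Ω E : Type*} [MeasurableSpace Ω] [MeasurableSpace E] (P : Measure Ω)
    {L : Ω → E} {g : E → ℝ≥0∞} (hL : Measurable L) (hg : Measurable g) :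
    (P.withDensity fun ω => g (L ω)).map L = (P.map L).withDensity g := by
  ext s hs
  rw [Measure.map_apply hL hs, withDensity_apply _ (hL hs), withDensity_apply _ hs,
    setLIntegral_map hs hg hL]

lemma pi_withDensity {ι : Type*} [Fintype ι] {Ω : ι → Type*} [∀ i, MeasurableSpace (Ω i)]
    (P : ∀ i, Measure (Ω i)) [∀ i, IsProbabilityMeasure (P i)]
    {g : ∀ i, Ω i → ℝ≥0∞} (hg : ∀ i, Measurable (g i))
    [∀ i, SigmaFinite ((P i).withDensity (g i))] :
    Measure.pi (fun i => (P i).withDensity (g i)) =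
      (Measure.pi P).withDensity fun ω => ∏ i, g i (ω i) := by
  refine Measure.pi_eq fun s hs => ?_
  have hind i : Measurable ((s i).indicator (g i)) := (hg i).indicator (hs i)
  have hprod : ((univ.pi s).indicator fun ω => ∏ i, g i (ω i)) =
      fun ω => ∏ i, (s i).indicator (g i) (ω i) := by
    classical
    ext ω
    simp [indicator, Finset.prod_ite_zero]
  calc (Measure.pi P).withDensity (fun ω => ∏ i, g i (ω i)) (univ.pi s)
      = ∫⁻ ω, ∏ i, (s i).indicator (g i) (ω i) ∂Measure.pi P := by
        rw [withDensity_apply _ (MeasurableSet.univ_pi hs),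
          ← lintegral_indicator (MeasurableSet.univ_pi hs), hprod]
    _ = ∏ i, ∫⁻ ω, (s i).indicator (g i) (ω i) ∂Measure.pi P :=
        lintegral_prod_eq_prod_lintegral_of_indepFun _ _
          (iIndepFun_pi fun i => (hind i).aemeasurable)
          fun i => (hind i).comp (measurable_pi_apply i)
    _ = ∏ i, (P i).withDensity (g i) (s i) := by
        refine Finset.prod_congr rfl fun i _ => ?_
        rw [withDensity_apply _ (hs i), ← lintegral_indicator (hs i)]
        exact (measurePreserving_eval P i).lintegral_comp (hind i)

section Test

variable {Ω : Type*} [MeasurableSpace Ω]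

/-- A randomized test: `φ ω` is the probability of rejecting the null hypothesis after observing
`ω`. These are the functions over which `tradeoff` takes its infimum. -/
structure IsRandomizedTest (φ : Ω → ℝ) : Prop where
  measurable : Measurable φ
  mem_Icc : ∀ ω, φ ω ∈ Icc (0 : ℝ) 1

variable {P Q : Measure Ω} {φ : Ω → ℝ} {α : ℝ}

lemma IsRandomizedTest.integrable (hφ : IsRandomizedTest φ) (ν : Measure Ω) [IsFiniteMeasure ν] :
    Integrable φ ν :=
  .of_mem_Icc 0 1 hφ.measurable.aemeasurable (ae_of_all _ hφ.mem_Icc)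

lemma IsRandomizedTest.integral_le_one (hφ : IsRandomizedTest φ) (ν : Measure Ω)
    [IsProbabilityMeasure ν] : ∫ ω, φ ω ∂ν ≤ 1 :=
  calc ∫ ω, φ ω ∂ν ≤ ∫ _, (1 : ℝ) ∂ν :=
        integral_mono (hφ.integrable ν) (integrable_const 1) fun ω => (hφ.mem_Icc ω).2
    _ = 1 := by simp

lemma IsRandomizedTest.integral_eq_zero_of_absolutelyContinuous [IsFiniteMeasure P]
    (hφ : IsRandomizedTest φ) (hQP : Q ≪ P) (hP : ∫ ω, φ ω ∂P ≤ 0) : ∫ ω, φ ω ∂Q = 0 := by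
  have hnonneg : 0 ≤ φ := fun ω => (hφ.mem_Icc ω).1
  have hae : φ =ᵐ[P] 0 := (integral_eq_zero_iff_of_nonneg hnonneg (hφ.integrable P)).1
    (hP.antisymm (integral_nonneg hnonneg))
  exact integral_eq_zero_of_ae (hQP.ae_le hae)

-- `hge` and `hle` say that `A` is the likelihood ratio region `{dQ/dP > c}`, up to the boundary.
lemma neyman_pearson [IsFiniteMeasure P] [IsFiniteMeasure Q] {A : Set Ω} (hA : MeasurableSet A)
    {c : ℝ≥0} (hge : c • P.restrict A ≤ Q.restrict A) (hle : Q.restrict Aᶜ ≤ c • P.restrict Aᶜ)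
    (hφ : IsRandomizedTest φ) :
    c * (P.real A - ∫ ω, φ ω ∂P) ≤ Q.real A - ∫ ω, φ ω ∂Q := by
  have hsplit (ν : Measure Ω) [IsFiniteMeasure ν] :
      ν.real A - ∫ ω, φ ω ∂ν = ∫ ω in A, (1 - φ ω) ∂ν - ∫ ω in Aᶜ, φ ω ∂ν := by
    rw [integral_sub (integrable_const 1) (hφ.integrable _), ← integral_add_compl hA
      (hφ.integrable ν), setIntegral_const, smul_eq_mul, mul_one]
    ring
  have hmem : c * ∫ ω in A, (1 - φ ω) ∂P ≤ ∫ ω in A, (1 - φ ω) ∂Q := by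
    refine (integral_smul_nnreal_measure _ c).symm.trans_le ?_
    exact integral_mono_measure hge (ae_of_all _ fun ω => sub_nonneg.2 (hφ.mem_Icc ω).2)
      ((integrable_const 1).sub (hφ.integrable _))
  have hcompl : ∫ ω in Aᶜ, φ ω ∂Q ≤ c * ∫ ω in Aᶜ, φ ω ∂P := by
    refine le_of_le_of_eq ?_ (integral_smul_nnreal_measure _ c)
    exact integral_mono_measure hle (ae_of_all _ fun ω => (hφ.mem_Icc ω).1) (hφ.integrable _)
  rw [hsplit P, hsplit Q, mul_sub]
  exact sub_le_sub hmem hcompl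

lemma neyman_pearson_withDensity [IsFiniteMeasure P] [IsFiniteMeasure Q] {g : Ω → ℝ≥0∞}
    (hg : Measurable g) (hQ : Q = P.withDensity g) (c : ℝ≥0) (hφ : IsRandomizedTest φ) :
    c * (P.real {ω | c < g ω} - ∫ ω, φ ω ∂P) ≤ Q.real {ω | c < g ω} - ∫ ω, φ ω ∂Q := by
  have hA : MeasurableSet {ω | c < g ω} := measurableSet_lt measurable_const hg
  have hconst (ν : Measure Ω) : c • ν = ν.withDensity fun _ => c := (withDensity_const _).symm
  refine neyman_pearson hA ?_ ?_ hφ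
  · rw [hQ, restrict_withDensity hA, hconst]
    exact withDensity_mono ((ae_restrict_mem hA).mono fun ω hω => le_of_lt hω)
  · rw [hQ, restrict_withDensity hA.compl, hconst]
    exact withDensity_mono ((ae_restrict_mem hA.compl).mono fun ω hω => not_lt.1 hω)

lemma le_tradeoff {b : ℝ} (hα : 0 ≤ α)
    (h : ∀ φ, IsRandomizedTest φ → ∫ ω, φ ω ∂P ≤ α → b ≤ 1 - ∫ ω, φ ω ∂Q) :
    b ≤ tradeoff P Q α := by
  refine le_csInf ⟨_, fun _ => 0, measurable_const, by simp, by simpa using hα, rfl⟩ ?_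
  rintro _ ⟨φ, hmeas, hmem, hle, rfl⟩
  exact h φ ⟨hmeas, hmem⟩ hle

end Test

/-- `L` is a version of the log-likelihood ratio `log (dQ/dP)`, and its law under `P` is
`N(-v/2, v)`. The mean is forced by the variance, because `exp L` has `P`-mean one. In privacy
terms, `L` is the negative of the privacy loss of `P` against `Q`. -/
structure IsGaussianLLR {Ω : Type*} [MeasurableSpace Ω] (L : Ω → ℝ) (v : ℝ≥0) (P Q : Measure Ω) :
    Prop where
  measurable : Measurable L
  eq_withDensity : Q = P.withDensity fun ω => ENNReal.ofReal (exp (L ω))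
  hasLaw : HasLaw L (gaussianReal (-(v / 2)) v) P

lemma isGaussianLLR_gaussianReal (m m' : ℝ) {v : ℝ≥0} (hv : v ≠ 0) :
    IsGaussianLLR (fun x => (m' - m) / v * (x - m) - (m' - m) ^ 2 / (2 * v)) (nndist m m' ^ 2 / v)
      (gaussianReal m v) (gaussianReal m' v) where
  measurable := by fun_prop
  eq_withDensity := gaussianReal_eq_withDensity m m' hv
  hasLaw := by
    have hv' : (v : ℝ) ≠ 0 := NNReal.coe_ne_zero.2 hv
    have hdist : dist m m' ^ 2 = (m' - m) ^ 2 := by rw [dist_comm, Real.dist_eq, sq_abs]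
    convert gaussianReal_sub_const (gaussianReal_const_mul (gaussianReal_sub_const HasLaw.id m)
      ((m' - m) / v)) ((m' - m) ^ 2 / (2 * v)) using 2
    · simp only [id]
    · push_cast
      rw [hdist]
      ring
    · refine NNReal.eq ?_
      push_cast
      rw [hdist]
      field_simp

namespace IsGaussianLLR

section

variable {Ω : Type*} [MeasurableSpace Ω] {P Q : Measure Ω} {L : Ω → ℝ} {v : ℝ≥0} {α : ℝ}

lemma isProbabilityMeasure_left (h : IsGaussianLLR L v P Q) : IsProbabilityMeasure P :=
  h.hasLaw.isProbabilityMeasure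

lemma eq_of_variance_eq_zero (h : IsGaussianLLR L 0 P Q) : Q = P := by
  have hL : L =ᵐ[P] fun _ => 0 := HasLaw.ae_eq_of_dirac <| by
    simpa [gaussianReal_zero_var] using h.hasLaw
  calc Q = P.withDensity fun ω => ENNReal.ofReal (exp (L ω)) := h.eq_withDensity
    _ = P.withDensity 1 := withDensity_congr_ae (hL.mono fun ω hω => by simp [hω])
    _ = P := withDensity_one

lemma hasLaw_right (h : IsGaussianLLR L v P Q) (hv : v ≠ 0) :
    HasLaw L (gaussianReal (v / 2) v) Q where
  aemeasurable := h.measurable.aemeasurable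
  map_eq := by
    rw [h.eq_withDensity, map_withDensity_comp P h.measurable
      (g := fun x => ENNReal.ofReal (exp x)) (by fun_prop), h.hasLaw.map_eq,
      gaussianReal_withDensity_exp hv]

lemma isProbabilityMeasure_right (h : IsGaussianLLR L v P Q) : IsProbabilityMeasure Q := by
  rcases eq_or_ne v 0 with rfl | hv
  · exact h.eq_of_variance_eq_zero ▸ h.isProbabilityMeasure_left
  · exact (h.hasLaw_right hv).isProbabilityMeasure

lemma absolutelyContinuous (h : IsGaussianLLR L v P Q) : Q ≪ P :=
  h.eq_withDensity ▸ withDensity_absolutelyContinuous _ _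

-- The threshold `√v t - v/2` is the `Phi t`-quantile of `L` under `P`.
lemma Phi_sub_sqrt_le (h : IsGaussianLLR L v P Q) (hv : v ≠ 0) {φ : Ω → ℝ}
    (hφ : IsRandomizedTest φ) {t : ℝ} (ht : ∫ ω, φ ω ∂P ≤ 1 - Phi t) :
    Phi (t - √v) ≤ 1 - ∫ ω, φ ω ∂Q := by
  have := h.isProbabilityMeasure_left
  have := h.isProbabilityMeasure_right
  set s : ℝ := √v * t - v / 2
  have hsqrt : √(v : ℝ) ≠ 0 := by simpa using hv
  have hv_sq : (v : ℝ) = √v * √v := (Real.mul_self_sqrt v.2).symm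
  have hP : P.real {ω | s < L ω} = 1 - Phi t := by
    rw [h.hasLaw.measureReal_eq measurableSet_Ioi]
    refine (gaussianReal_real_Ioi _ _ hv).trans ?_
    congr 2
    field_simp
    ring
  have hQ : Q.real {ω | s < L ω} = 1 - Phi (t - √v) := by
    rw [(h.hasLaw_right hv).measureReal_eq measurableSet_Ioi]
    refine (gaussianReal_real_Ioi _ _ hv).trans ?_
    congr 2
    field_simp
    linear_combination -2 * hv_sq
  have hset : {ω | s < L ω} = {ω | ((exp s).toNNReal : ℝ≥0∞) < ENNReal.ofReal (exp (L ω))} := by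
    ext ω
    exact (ENNReal.ofReal_lt_ofReal_iff (exp_pos _)).trans exp_lt_exp |>.symm
  have hNP := neyman_pearson_withDensity h.measurable.exp.ennreal_ofReal h.eq_withDensity
    (exp s).toNNReal hφ
  rw [← hset, hP, hQ] at hNP
  have hnonneg : 0 ≤ ((exp s).toNNReal : ℝ) * (1 - Phi t - ∫ ω, φ ω ∂P) :=
    mul_nonneg NNReal.zero_le_coe (sub_nonneg.2 ht)
  linarith

lemma Gmu_sqrt_le_tradeoff (h : IsGaussianLLR L v P Q) (hα : α ∈ Icc (0 : ℝ) 1) :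
    Gmu (√v) α ≤ tradeoff P Q α := by
  have := h.isProbabilityMeasure_left
  have := h.isProbabilityMeasure_right
  refine le_tradeoff hα.1 fun φ hφ hle => ?_
  unfold Gmu
  split_ifs with h0 h1
  · rw [hφ.integral_eq_zero_of_absolutelyContinuous h.absolutelyContinuous (hle.trans h0), sub_zero]
  · exact sub_nonneg.2 (hφ.integral_le_one Q)
  · have hPhi : Phi (PhiInv (1 - α)) = 1 - α := Phi_PhiInv ⟨by linarith, by linarith⟩
    rcases eq_or_ne v 0 with rfl | hv
    · rw [h.eq_of_variance_eq_zero, NNReal.coe_zero, Real.sqrt_zero, sub_zero, hPhi]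
      exact sub_le_sub_left hle 1
    · exact h.Phi_sub_sqrt_le hv hφ (by rwa [hPhi, sub_sub_cancel])

end

lemma pi {ι : Type*} [Fintype ι] {Ω : ι → Type*} [∀ i, MeasurableSpace (Ω i)]
    {P Q : ∀ i, Measure (Ω i)} {L : ∀ i, Ω i → ℝ} {v : ι → ℝ≥0}
    (h : ∀ i, IsGaussianLLR (L i) (v i) (P i) (Q i)) :
    IsGaussianLLR (fun ω => ∑ i, L i (ω i)) (∑ i, v i) (Measure.pi P) (Measure.pi Q) where
  measurable := Finset.measurable_fun_sum _ fun i _ => (h i).measurable.comp (measurable_pi_apply i)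
  eq_withDensity := by
    have hP i := (h i).isProbabilityMeasure_left
    have (i : ι) : IsProbabilityMeasure ((P i).withDensity fun ω => ENNReal.ofReal (exp (L i ω))) :=
      (h i).eq_withDensity ▸ (h i).isProbabilityMeasure_right
    have hL i := (h i).measurable
    rw [funext fun i => (h i).eq_withDensity, pi_withDensity P fun i => by fun_prop]
    simp only [exp_sum, ENNReal.ofReal_prod_of_nonneg fun _ _ => (exp_pos _).le]
  hasLaw := by
    have hP i := (h i).isProbabilityMeasure_left
    have hlaw i : HasLaw (fun ω : ∀ i, Ω i => L i (ω i)) (gaussianReal (-(v i / 2)) (v i))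
        (Measure.pi P) := (h i).hasLaw.fun_comp (measurePreserving_eval P i).hasLaw
    have hindep : iIndepFun (fun i (ω : ∀ i, Ω i) => L i (ω i)) (Measure.pi P) :=
      iIndepFun_pi fun i => (h i).measurable.aemeasurable
    convert hasLaw_sum_gaussianReal hlaw hindep using 2
    push_cast
    rw [Finset.sum_neg_distrib, Finset.sum_div]

end IsGaussianLLR

/-- A composition of Gaussian mechanisms satisfying `ρ`-zCDP (with
`ρᵢ = Δᵢ²/(2σᵢ²)` and `Σρᵢ = ρ`) satisfies `√(2ρ)`-GDP. -/
theorem zcdp_gaussian_composition_gdp {X : Type*} (k : ℕ)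
    (f : Fin k → X → ℝ) (Neighbor : X → X → Prop)
    (σ Δ : Fin k → ℝ) (hσ : ∀ i, 0 < σ i)
    (hΔ : ∀ i x x', Neighbor x x' → |f i x - f i x'| ≤ Δ i)
    (ρ : ℝ) (hρ : ∑ i, (Δ i) ^ 2 / (2 * (σ i) ^ 2) = ρ)
    (M : X → Measure (Fin k → ℝ))
    (hM : ∀ x, M x = Measure.pi fun i => gaussianReal (f i x) (((σ i) ^ 2).toNNReal)) :
    IsGDP M Neighbor (Real.sqrt (2 * ρ)) := by
  intro x x' hN α hα
  have hv i : (σ i ^ 2).toNNReal ≠ 0 := (Real.toNNReal_pos.2 (sq_pos_of_pos (hσ i))).ne'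
  have hLLR := IsGaussianLLR.pi fun i => isGaussianLLR_gaussianReal (f i x) (f i x') (hv i)
  have hle : ((∑ i, nndist (f i x) (f i x') ^ 2 / (σ i ^ 2).toNNReal : ℝ≥0) : ℝ) ≤ 2 * ρ := by
    push_cast
    rw [← hρ, Finset.mul_sum]
    refine Finset.sum_le_sum fun i _ => ?_
    calc dist (f i x) (f i x') ^ 2 / ((σ i ^ 2).toNNReal : ℝ)
        ≤ Δ i ^ 2 / σ i ^ 2 := by
          rw [Real.coe_toNNReal _ (sq_nonneg _)]
          gcongr
          exact hΔ i x x' hN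
      _ = 2 * (Δ i ^ 2 / (2 * σ i ^ 2)) := by ring
  rw [hM, hM]
  exact (Gmu_antitone α (Real.sqrt_le_sqrt hle)).trans (hLLR.Gmu_sqrt_le_tradeoff hα)
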